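/- For a finite index set I with a reflexive symmetric relation ~, any probability mass function on L^I (L countable) of the form p(x) = ∏_{cliques C} φ_C(x_C) with strictly positive clique interaction functions φ_C satisfies the local Markov property: p(X_i = x_i | X_j = x_j, j ≠ i) depends only on x_i and (x_j)_{j ∈ ∂(i)} where ∂(i) = {j ≠ i : j ~ i}. -/

import Mathlib

open scoped Classical

/-- A Gibbs factorisation over the cliques of a reflexive symmetric relation on a finite
index set satisfies the local Markov property: the conditional probability of the value
at a site `i` given all other sites depends only on the values at the neighbours of `i`. -/
theorem gibbs_implies_local_markov {I L : Type*} [Fintype I] [DecidableEq I] [Countable L]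
    (r : I → I → Prop) (hrefl : ∀ i, r i i) (hsymm : ∀ i j, r i j → r j i)
    (φ : Finset I → (I → L) → ℝ)
    (hφpos : ∀ C x, 0 < φ C x)
    (hφloc : ∀ (C : Finset I) (x y : I → L), (∀ i ∈ C, x i = y i) → φ C x = φ C y)
    (p : (I → L) → ℝ)
    (hp : ∀ x, p x
      = ∏ C ∈ Finset.univ.powerset.filter (fun C : Finset I => ∀ i ∈ C, ∀ j ∈ C, r i j),
          φ C x)
    (hpmf : ∑' x : I → L, p x = 1)
    (i : I) (a : L) (x y : I → L)
    (hxy : ∀ j, j ≠ i → r j i → x j = y j) :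
    p (Function.update x i a) / ∑' b : L, p (Function.update x i b)
      = p (Function.update y i a) / ∑' b : L, p (Function.update y i b) := by
  set S := Finset.univ.powerset.filter (fun C : Finset I => ∀ i ∈ C, ∀ j ∈ C, r i j)
  -- Cliques avoiding `i` do not see the update; cliques through `i` only see neighbours of `i`.
  have hfactor : ∀ b, p (Function.update x i b)
      = (∏ C ∈ S, if i ∈ C then 1 else φ C x / φ C y) * p (Function.update y i b) := by
    intro b
    rw [hp, hp, ← Finset.prod_mul_distrib]
    refine Finset.prod_congr rfl fun C hC => ?_
    have hclique := (Finset.mem_filter.mp hC).2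
    split_ifs with hi
    · rw [one_mul]
      refine hφloc C _ _ fun j hj => ?_
      by_cases hji : j = i
      · simp [hji]
      · simpa [hji] using hxy j hji (hclique j hj i hi)
    · have hupdate : ∀ z : I → L, φ C (Function.update z i b) = φ C z := fun z =>
        hφloc C _ _ fun j hj => Function.update_of_ne (ne_of_mem_of_not_mem hj hi) _ _
      rw [hupdate, hupdate, div_mul_cancel₀ _ (hφpos C y).ne']
  have hne : (∏ C ∈ S, if i ∈ C then 1 else φ C x / φ C y) ≠ 0 := by
    refine Finset.prod_ne_zero_iff.mpr fun C _ => ?_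
    split_ifs
    · exact one_ne_zero
    · exact (div_pos (hφpos C x) (hφpos C y)).ne'
  simp only [hfactor]
  rw [tsum_mul_left, mul_div_mul_left _ _ hne]
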